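/- In the two-state i.i.d. model, if m(n) = ⌈c·n^{2+α}⌉ and l(n) = ⌈c'·n^{2+α}⌉ for some constants c > 0, c' > 0 and α > 0, then user 1 has no privacy at every time k ∈ {1, …, m}: the infimum, over all estimators X̃_1(k) that are measurable functions of (W, Y), of the error probability P(X̃_1(k) ≠ X_1(k)) tends to 0 as n → ∞. -/

import Mathlib

open MeasureTheory ProbabilityTheory Filter
open scoped ENNReal NNReal

/-- Bernoulli measure on `Bool` with success probability `p`. -/
noncomputable def bern (p : ℝ) : Measure Bool :=
  ENNReal.ofReal p • Measure.dirac true + ENNReal.ofReal (1 - p) • Measure.dirac false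

/-- Joint law of (parameters, actual traces, training traces) in the two-state i.i.d. model:
the parameters `p u` are i.i.d. with law `μP`, and conditionally on the parameters the
`n` actual traces (of length `m`) and training traces (of length `l`) consist of i.i.d.
`Bernoulli (p u)` samples, all mutually independent. -/
noncomputable def twoStateLaw (n m l : ℕ) (μP : Measure ℝ) :
    Measure ((Fin n → ℝ) × (Fin n → Fin m → Bool) × (Fin n → Fin l → Bool)) :=
  (Measure.pi fun _ : Fin n => μP).bind fun p =>
    (Measure.dirac p).prod
      ((Measure.pi fun u : Fin n => Measure.pi fun _ : Fin m => bern (p u)).prod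
        (Measure.pi fun u : Fin n => Measure.pi fun _ : Fin l => bern (p u)))

/-- Number of successes divided by length. -/
noncomputable def avgB {N : ℕ} (x : Fin N → Bool) : ℝ :=
  (∑ i, (if x i then (1 : ℝ) else 0)) / N

lemma bern_prob {p : ℝ} (hp : p ∈ Set.Icc (0 : ℝ) 1) : IsProbabilityMeasure (bern p) := by
  constructor
  simp only [bern, Measure.coe_add, Measure.coe_smul, Pi.add_apply, Pi.smul_apply, measure_univ,
    smul_eq_mul, mul_one]
  rw [← ENNReal.ofReal_add hp.1 (by linarith [hp.2])]
  simp

instance bern_finite (p : ℝ) : IsFiniteMeasure (bern p) := by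
  constructor
  simp only [bern, Measure.coe_add, Measure.coe_smul, Pi.add_apply, Pi.smul_apply, measure_univ,
    smul_eq_mul, mul_one]
  simp

lemma bern_mean {p : ℝ} (hp : p ∈ Set.Icc (0 : ℝ) 1) (a b : ℝ) :
    ∫ x, (if x then a else b) ∂(bern p) = p * a + (1 - p) * b := by
  have h1 : Integrable (fun x : Bool => if x then a else b) (ENNReal.ofReal p • Measure.dirac true) :=
    (Integrable.of_finite).smul_measure ENNReal.ofReal_ne_top
  have h2 : Integrable (fun x : Bool => if x then a else b)
      (ENNReal.ofReal (1 - p) • Measure.dirac false) :=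
    (Integrable.of_finite).smul_measure ENNReal.ofReal_ne_top
  rw [bern, integral_add_measure h1 h2, integral_smul_measure, integral_smul_measure,
    integral_dirac, integral_dirac, ENNReal.toReal_ofReal hp.1,
    ENNReal.toReal_ofReal (by linarith [hp.2])]
  simp

lemma hoeff_one {p : ℝ} (hp : p ∈ Set.Icc (0 : ℝ) 1) (N : ℕ) (hN : 0 < N) {t : ℝ} (ht : 0 ≤ t)
    (a b : ℝ) (hab : |b - a| = 1) :
    (Measure.pi fun _ : Fin N => bern p).real
      {x | N * t ≤ ∑ i, ((if x i then b else a) - (p * b + (1 - p) * a))} ≤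
      Real.exp (-2 * N * t ^ 2) := by
  have := bern_prob hp
  have hmeas : ∀ i : Fin N, AEMeasurable
      (fun y : Bool => (if y then b else a) - (p * b + (1 - p) * a)) (bern p) :=
    fun _ => Measurable.of_discrete.aemeasurable
  have hind := iIndepFun_pi (μ := fun _ : Fin N => bern p)
    (X := fun _ y => (if y then b else a) - (p * b + (1 - p) * a)) hmeas
  have hsub : ∀ i ∈ (Finset.univ : Finset (Fin N)),
      HasSubgaussianMGF (fun x : Fin N → Bool => (if x i then b else a) - (p * b + (1 - p) * a))
        ((1 / 2 : ℝ≥0) ^ 2) (Measure.pi fun _ : Fin N => bern p) := by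
    intro i _
    have hb : ∀ᵐ y ∂(bern p), (if y then b else a) ∈ Set.Icc (min a b) (max a b) := by
      refine Filter.Eventually.of_forall fun y => ?_
      cases y <;> simp
    have h0 := hasSubgaussianMGF_of_mem_Icc (μ := bern p)
      (X := fun y : Bool => if y then b else a) Measurable.of_discrete.aemeasurable hb
    rw [bern_mean hp] at h0
    have h1 : ‖max a b - min a b‖₊ = 1 := by
      ext
      rw [coe_nnnorm, max_sub_min_eq_abs, Real.norm_eq_abs, abs_abs, hab]; rfl
    rw [h1] at h0
    have hmp := measurePreserving_eval (fun _ : Fin N => bern p) i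
    rw [← hmp.map_eq] at h0
    exact h0.of_map hmp.aemeasurable
  have hN' : (0 : ℝ) < N := by exact_mod_cast hN
  have := HasSubgaussianMGF.measure_sum_ge_le_of_iIndepFun hind hsub (ε := N * t) (by positivity)
  refine this.trans (le_of_eq ?_)
  congr 1
  simp
  field_simp

lemma hoeff {p : ℝ} (hp : p ∈ Set.Icc (0 : ℝ) 1) (N : ℕ) (hN : 0 < N) {t : ℝ} (ht : 0 ≤ t) :
    (Measure.pi fun _ : Fin N => bern p) {x | t ≤ |avgB x - p|} ≤
      ENNReal.ofReal (2 * Real.exp (-2 * N * t ^ 2)) := by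
  have := bern_prob hp
  have hN' : (0 : ℝ) < N := by exact_mod_cast hN
  have h1 := hoeff_one hp N hN ht 0 1 (by simp)
  have h2 := hoeff_one hp N hN ht 0 (-1) (by simp)
  rw [← ofReal_measureReal]
  apply ENNReal.ofReal_le_ofReal
  rw [two_mul]
  refine le_trans ?_ (add_le_add h1 h2)
  refine le_trans (measureReal_mono ?_) (measureReal_union_le _ _)
  intro x hx
  simp only [Set.mem_ofPred_eq, Set.mem_union] at hx ⊢
  have e1 : ∑ i, ((if x i then (1 : ℝ) else 0) - (p * 1 + (1 - p) * 0)) = N * (avgB x - p) := by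
    rw [Finset.sum_sub_distrib, avgB]
    simp only [Finset.sum_const, Finset.card_univ, Fintype.card_fin, nsmul_eq_mul]
    field_simp
    ring
  have e2 : ∑ i, ((if x i then (-1 : ℝ) else 0) - (p * (-1) + (1 - p) * 0))
      = N * (-(avgB x - p)) := by
    rw [mul_neg (N : ℝ), ← e1, ← Finset.sum_neg_distrib]
    refine Finset.sum_congr rfl fun i _ => ?_
    split_ifs <;> ring
  rw [e1, e2]
  rcases le_abs.1 hx with h | h
  · left; gcongr
  · right; gcongr

lemma muP_bound {f : ℝ → ℝ} {δ₁ δ₂ : ℝ} (hδ₁ : 0 < δ₁) {μP : Measure ℝ}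
    (hμP : μP = volume.withDensity fun x => ENNReal.ofReal (f x))
    (hf0 : ∀ x ∉ Set.Ioo (0 : ℝ) 1, f x = 0)
    (hf : ∀ x ∈ Set.Ioo (0 : ℝ) 1, δ₁ < f x ∧ f x < δ₂) {s : Set ℝ} (hs : MeasurableSet s) :
    μP s ≤ ENNReal.ofReal δ₂ * volume s := by
  rw [hμP, withDensity_apply _ hs, ← setLIntegral_const]
  refine lintegral_mono fun x => ?_
  apply ENNReal.ofReal_le_ofReal
  by_cases hx : x ∈ Set.Ioo (0 : ℝ) 1
  · exact (hf x hx).2.le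
  · rw [hf0 x hx]
    have := hf (1/2) (by norm_num)
    linarith

lemma muP_ae {f : ℝ → ℝ} {μP : Measure ℝ}
    (hμP : μP = volume.withDensity fun x => ENNReal.ofReal (f x))
    (hf0 : ∀ x ∉ Set.Ioo (0 : ℝ) 1, f x = 0) : ∀ᵐ x ∂μP, x ∈ Set.Icc (0 : ℝ) 1 := by
  have : μP (Set.Ioo (0 : ℝ) 1)ᶜ = 0 := by
    rw [hμP, withDensity_apply _ measurableSet_Ioo.compl,
      setLIntegral_congr_fun measurableSet_Ioo.compl (g := fun _ => 0)]
    · simp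
    · intro x hx
      simp [hf0 x hx]
  have h2 : ∀ᵐ x ∂μP, x ∈ Set.Ioo (0 : ℝ) 1 := this
  filter_upwards [h2] with x hx using Set.Ioo_subset_Icc_self hx

lemma law_le (n m l : ℕ) (μP : Measure ℝ) [IsProbabilityMeasure μP]
    (hae : ∀ᵐ x ∂μP, x ∈ Set.Icc (0 : ℝ) 1)
    {s : Set ((Fin n → ℝ) × (Fin n → Fin m → Bool) × (Fin n → Fin l → Bool))}
    (hs : MeasurableSet s) (C : ℝ≥0∞)
    (h : ∀ p : Fin n → ℝ, (∀ u, p u ∈ Set.Icc (0 : ℝ) 1) →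
      ((Measure.pi fun u : Fin n => Measure.pi fun _ : Fin m => bern (p u)).prod
        (Measure.pi fun u : Fin n => Measure.pi fun _ : Fin l => bern (p u)))
        (Prod.mk p ⁻¹' s) ≤ C) :
    twoStateLaw n m l μP s ≤ C := by
  refine (Measure.bind_apply_le _ hs).trans ?_
  have hp : ∀ᵐ p ∂(Measure.pi fun _ : Fin n => μP), ∀ u, p u ∈ Set.Icc (0 : ℝ) 1 := by
    rw [ae_all_iff]
    intro u
    exact (measurePreserving_eval (fun _ : Fin n => μP) u).quasiMeasurePreserving.ae hae
  calc _ ≤ ∫⁻ p, C ∂(Measure.pi fun _ : Fin n => μP) := by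
        refine lintegral_mono_ae ?_
        filter_upwards [hp] with p hp
        rw [Measure.dirac_prod, Measure.map_apply measurable_prodMk_left hs]
        exact h p hp
    _ = C := by simp

lemma meas_x (n m l : ℕ) (u : Fin n) (t : ℝ) : MeasurableSet
    {q : (Fin n → ℝ) × (Fin n → Fin m → Bool) × (Fin n → Fin l → Bool) |
      t ≤ |avgB (q.2.1 u) - q.1 u|} := by
  have : Measurable (avgB : (Fin m → Bool) → ℝ) := Measurable.of_discrete
  refine measurableSet_le measurable_const ?_
  refine Measurable.abs ?_
  fun_prop

lemma meas_w (n m l : ℕ) (u : Fin n) (t : ℝ) : MeasurableSet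
    {q : (Fin n → ℝ) × (Fin n → Fin m → Bool) × (Fin n → Fin l → Bool) |
      t ≤ |avgB (q.2.2 u) - q.1 u|} := by
  have : Measurable (avgB : (Fin l → Bool) → ℝ) := Measurable.of_discrete
  refine measurableSet_le measurable_const ?_
  refine Measurable.abs ?_
  fun_prop

lemma meas_p (n m l : ℕ) (u v : Fin n) (t : ℝ) : MeasurableSet
    {q : (Fin n → ℝ) × (Fin n → Fin m → Bool) × (Fin n → Fin l → Bool) |
      |q.1 u - q.1 v| ≤ 4 * t} := by
  refine measurableSet_le ?_ measurable_const
  refine Measurable.abs ?_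
  fun_prop

lemma law_x (n m l : ℕ) (hm : 0 < m) (μP : Measure ℝ) [IsProbabilityMeasure μP]
    (hae : ∀ᵐ x ∂μP, x ∈ Set.Icc (0 : ℝ) 1) (u : Fin n) {t : ℝ} (ht : 0 ≤ t) :
    twoStateLaw n m l μP {q | t ≤ |avgB (q.2.1 u) - q.1 u|} ≤
      ENNReal.ofReal (2 * Real.exp (-2 * m * t ^ 2)) := by
  refine law_le n m l μP hae (meas_x n m l u t) _ fun p hp => ?_
  have := fun u => bern_prob (hp u)
  have hmp := (measurePreserving_eval (fun u : Fin n => Measure.pi fun _ : Fin m => bern (p u)) u).comp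
    (measurePreserving_fst (μ := Measure.pi fun u : Fin n => Measure.pi fun _ : Fin m => bern (p u))
      (ν := Measure.pi fun u : Fin n => Measure.pi fun _ : Fin l => bern (p u)))
  have := hmp.measure_preimage (s := {x | t ≤ |avgB x - p u|})
    (MeasurableSet.of_discrete).nullMeasurableSet
  exact this.le.trans (hoeff (hp u) m hm ht)

lemma law_w (n m l : ℕ) (hl : 0 < l) (μP : Measure ℝ) [IsProbabilityMeasure μP]
    (hae : ∀ᵐ x ∂μP, x ∈ Set.Icc (0 : ℝ) 1) (u : Fin n) {t : ℝ} (ht : 0 ≤ t) :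
    twoStateLaw n m l μP {q | t ≤ |avgB (q.2.2 u) - q.1 u|} ≤
      ENNReal.ofReal (2 * Real.exp (-2 * l * t ^ 2)) := by
  refine law_le n m l μP hae (meas_w n m l u t) _ fun p hp => ?_
  have := fun u => bern_prob (hp u)
  have hmp := (measurePreserving_eval (fun u : Fin n => Measure.pi fun _ : Fin l => bern (p u)) u).comp
    (measurePreserving_snd (μ := Measure.pi fun u : Fin n => Measure.pi fun _ : Fin m => bern (p u))
      (ν := Measure.pi fun u : Fin n => Measure.pi fun _ : Fin l => bern (p u)))
  have := hmp.measure_preimage (s := {x | t ≤ |avgB x - p u|})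
    (MeasurableSet.of_discrete).nullMeasurableSet
  exact this.le.trans (hoeff (hp u) l hl ht)

lemma law_p (n m l : ℕ) (μP : Measure ℝ) [IsProbabilityMeasure μP]
    (hae : ∀ᵐ x ∂μP, x ∈ Set.Icc (0 : ℝ) 1) {δ : ℝ} (hδ : 0 ≤ δ)
    (hb : ∀ s, MeasurableSet s → μP s ≤ ENNReal.ofReal δ * volume s)
    (u v : Fin n) (huv : u ≠ v) {t : ℝ} (ht : 0 ≤ t) :
    twoStateLaw n m l μP {q | |q.1 u - q.1 v| ≤ 4 * t} ≤
      ENNReal.ofReal (δ * (8 * t)) := by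
  refine (Measure.bind_apply_le _ (meas_p n m l u v t)).trans ?_
  have hp : ∀ᵐ p ∂(Measure.pi fun _ : Fin n => μP), ∀ u, p u ∈ Set.Icc (0 : ℝ) 1 := by
    rw [ae_all_iff]
    intro u
    exact (measurePreserving_eval (fun _ : Fin n => μP) u).quasiMeasurePreserving.ae hae
  have hms : MeasurableSet {p : Fin n → ℝ | |p u - p v| ≤ 4 * t} := by
    refine measurableSet_le (Measurable.abs ?_) measurable_const
    fun_prop
  have hms2 : MeasurableSet {p : ℝ × ℝ | |p.2 - p.1| ≤ 4 * t} := by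
    refine measurableSet_le (Measurable.abs ?_) measurable_const
    fun_prop
  have hind := (iIndepFun_pi (μ := fun _ : Fin n => μP) (X := fun _ => id)
    (fun _ => aemeasurable_id)).indepFun huv.symm
  simp only [id] at hind
  rw [indepFun_iff_map_prod_eq_prod_map_map (measurable_pi_apply v).aemeasurable
    (measurable_pi_apply u).aemeasurable] at hind
  have hev : ∀ w, (Measure.pi fun _ : Fin n => μP).map (fun ω => ω w) = μP := fun w =>
    (measurePreserving_eval (fun _ : Fin n => μP) w).map_eq
  rw [hev, hev] at hind
  calc _ ≤ ∫⁻ p, {p : Fin n → ℝ | |p u - p v| ≤ 4 * t}.indicator 1 p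
            ∂(Measure.pi fun _ : Fin n => μP) := by
        refine lintegral_mono_ae ?_
        filter_upwards [hp] with p hp
        have := fun u => bern_prob (hp u)
        rw [Measure.dirac_prod, Measure.map_apply measurable_prodMk_left (meas_p n m l u v t)]
        by_cases h : |p u - p v| ≤ 4 * t
        · rw [Set.indicator_of_mem (by exact h)]
          exact prob_le_one
        · have : (Prod.mk p ⁻¹' {q : (Fin n → ℝ) × (Fin n → Fin m → Bool) × (Fin n → Fin l → Bool) |
              |q.1 u - q.1 v| ≤ 4 * t}) = ∅ := by
            ext q; simpa using h
          rw [this]; simp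
    _ = (Measure.pi fun _ : Fin n => μP) {p : Fin n → ℝ | |p u - p v| ≤ 4 * t} :=
        lintegral_indicator_one hms
    _ = (μP.prod μP) {p : ℝ × ℝ | |p.2 - p.1| ≤ 4 * t} := by
        rw [← hind, Measure.map_apply (by fun_prop) hms2]
        rfl
    _ = ∫⁻ x, μP (Prod.mk x ⁻¹' {p : ℝ × ℝ | |p.2 - p.1| ≤ 4 * t}) ∂μP :=
        Measure.prod_apply hms2
    _ ≤ ∫⁻ x, ENNReal.ofReal (δ * (8 * t)) ∂μP := by
        refine lintegral_mono fun x => ?_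
        refine (hb _ (measurable_prodMk_left hms2)).trans ?_
        have : Prod.mk x ⁻¹' {p : ℝ × ℝ | |p.2 - p.1| ≤ 4 * t} = Set.Icc (x - 4 * t) (x + 4 * t) := by
          ext y
          simp only [Set.mem_preimage, Set.mem_ofPred_eq, Set.mem_Icc, abs_le]
          constructor <;> rintro ⟨h1, h2⟩ <;> constructor <;> linarith
        rw [this, Real.volume_Icc, ← ENNReal.ofReal_mul hδ]
        apply ENNReal.ofReal_le_ofReal
        apply le_of_eq; ring
    _ = _ := by simp

/-- The bad event. -/
def badSet (n m l : ℕ) (z : Fin n) (t : ℝ) :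
    Set ((Fin n → ℝ) × (Fin n → Fin m → Bool) × (Fin n → Fin l → Bool)) :=
  (⋃ u : Fin n, {q | t ≤ |avgB (q.2.1 u) - q.1 u|}) ∪ {q | t ≤ |avgB (q.2.2 z) - q.1 z|} ∪
    ⋃ u ∈ Finset.univ.filter (fun u : Fin n => u ≠ z), {q | |q.1 u - q.1 z| ≤ 4 * t}

lemma badSet_meas (n m l : ℕ) (z : Fin n) (t : ℝ) : MeasurableSet (badSet n m l z t) := by
  refine ((MeasurableSet.iUnion fun u => meas_x n m l u t).union (meas_w n m l z t)).union ?_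
  exact Finset.measurableSet_biUnion _ fun u _ => meas_p n m l u z t

lemma law_bad (n m l : ℕ) (hm : 0 < m) (hl : 0 < l) (μP : Measure ℝ) [IsProbabilityMeasure μP]
    (hae : ∀ᵐ x ∂μP, x ∈ Set.Icc (0 : ℝ) 1) {δ : ℝ} (hδ : 0 ≤ δ)
    (hb : ∀ s, MeasurableSet s → μP s ≤ ENNReal.ofReal δ * volume s)
    (z : Fin n) {t : ℝ} (ht : 0 ≤ t) :
    twoStateLaw n m l μP (badSet n m l z t) ≤
      ENNReal.ofReal (n * (2 * Real.exp (-2 * m * t ^ 2)) + 2 * Real.exp (-2 * l * t ^ 2)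
        + n * (δ * (8 * t))) := by
  rw [ENNReal.ofReal_add (by positivity) (by positivity),
    ENNReal.ofReal_add (by positivity) (by positivity), ENNReal.ofReal_mul (by positivity),
    ENNReal.ofReal_mul (p := (n : ℝ)) (q := δ * (8 * t)) (by positivity), ENNReal.ofReal_natCast]
  refine (measure_union_le _ _).trans (add_le_add ((measure_union_le _ _).trans
    (add_le_add ?_ (law_w n m l hl μP hae z ht))) ?_)
  · refine (measure_iUnion_fintype_le _ _).trans ?_
    refine (Finset.sum_le_card_nsmul _ _ _ fun u _ => law_x n m l hm μP hae u ht).trans ?_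
    simp
  · refine (measure_biUnion_finset_le _ _).trans ?_
    refine (Finset.sum_le_card_nsmul _ _ _ fun u hu =>
      law_p n m l μP hae hδ hb u z (by simpa using hu) ht).trans ?_
    rw [nsmul_eq_mul]
    gcongr
    simpa using Finset.card_filter_le (Finset.univ : Finset (Fin n)) (fun u => u ≠ z)

lemma exists_est (n m l : ℕ) (z : Fin n) (k : Fin m) :
    ∃ g : (Fin n → Fin l → Bool) × (Fin n → Fin m → Bool) → Bool, Measurable g ∧
      ∀ (t : ℝ) (p : Fin n → ℝ) (x : Fin n → Fin m → Bool) (w : Fin n → Fin l → Bool)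
        (σ : Equiv.Perm (Fin n)),
        g (w, fun v => x (σ.symm v)) ≠ x z k → (p, x, w) ∈ badSet n m l z t := by
  have : Nonempty (Fin n) := ⟨z⟩
  have hmin : ∀ q : (Fin n → Fin l → Bool) × (Fin n → Fin m → Bool), ∃ v : Fin n, ∀ v',
      |avgB (q.1 z) - avgB (q.2 v)| ≤ |avgB (q.1 z) - avgB (q.2 v')| := fun q =>
    Finite.exists_min fun v => |avgB (q.1 z) - avgB (q.2 v)|
  choose V hV using hmin
  refine ⟨fun q => q.2 (V q) k, Measurable.of_discrete, ?_⟩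
  intro t p x w σ hne
  by_contra hbad
  simp only [badSet, Set.mem_union, Set.mem_iUnion, Set.mem_ofPred_eq, Finset.mem_filter,
    Finset.mem_univ, true_and, not_or, not_exists, not_le] at hbad
  obtain ⟨⟨h1, h2⟩, h3⟩ := hbad
  set v := V (w, fun v => x (σ.symm v)) with hv
  have h4 := hV (w, fun v => x (σ.symm v)) (σ z)
  simp only [← hv, Equiv.symm_apply_apply] at h4
  have hu : σ.symm v ≠ z := by
    intro h
    apply hne
    simp only [← hv, h]
  have h5 := h3 _ hu
  have h6 := h1 (σ.symm v)
  have h7 := h1 z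
  have e1 : |avgB (w z) - avgB (x z)| ≤ |avgB (w z) - p z| + |avgB (x z) - p z| := by
    have := abs_sub (avgB (w z) - p z) (avgB (x z) - p z)
    simpa using this
  have e2 : |p (σ.symm v) - p z| ≤ |avgB (w z) - p z| + |avgB (w z) - avgB (x (σ.symm v))|
      + |avgB (x (σ.symm v)) - p (σ.symm v)| := by
    have : p (σ.symm v) - p z = (avgB (w z) - p z) - (avgB (w z) - avgB (x (σ.symm v)))
      - (avgB (x (σ.symm v)) - p (σ.symm v)) := by ring
    rw [this]
    exact (abs_sub _ _).trans (by gcongr; exact abs_sub _ _)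
  linarith

lemma tend_exp (c α : ℝ) (hc : 0 < c) (hα : 0 < α) :
    Tendsto (fun n : ℕ => (n : ℝ) * Real.exp (-(2 * c) * (n : ℝ) ^ (α / 2))) atTop (nhds 0) := by
  have h := tendsto_rpow_mul_exp_neg_mul_atTop_nhds_zero (2 / α) (2 * c) (by positivity)
  have h2 : Tendsto (fun n : ℕ => (n : ℝ) ^ (α / 2)) atTop atTop :=
    (tendsto_rpow_atTop (by positivity)).comp tendsto_natCast_atTop_atTop
  refine (h.comp h2).congr fun n => ?_
  simp only [Function.comp]
  rw [← Real.rpow_mul (by positivity)]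
  have : α / 2 * (2 / α) = 1 := by field_simp
  rw [this, Real.rpow_one]

/-- **Two-state i.i.d. model, no privacy.**  If `m n = ⌈c n^(2+α)⌉` and `l n = ⌈c' n^(2+α)⌉`
for some `c, c', α > 0`, then user 1 has no privacy at every time `k`: the infimum over all
estimators (measurable functions of the adversary's observations `(W, Y)`, where
`Y v = X (Π⁻¹ v)` is the anonymized data) of the probability of incorrectly estimating
`X_1(k)` tends to `0` as `n → ∞`. -/
theorem two_state_no_privacy
    (f : ℝ → ℝ) (δ₁ δ₂ : ℝ) (hδ₁ : 0 < δ₁)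
    (μP : Measure ℝ) [IsProbabilityMeasure μP]
    (hμP : μP = volume.withDensity fun x => ENNReal.ofReal (f x))
    (hf0 : ∀ x ∉ Set.Ioo (0 : ℝ) 1, f x = 0)
    (hf : ∀ x ∈ Set.Ioo (0 : ℝ) 1, δ₁ < f x ∧ f x < δ₂)
    (m l : ℕ → ℕ) (c c' α : ℝ) (hc : 0 < c) (hc' : 0 < c') (hα : 0 < α)
    (hm : ∀ n : ℕ, m n = ⌈c * (n : ℝ) ^ ((2 : ℝ) + α)⌉₊)
    (hl : ∀ n : ℕ, l n = ⌈c' * (n : ℝ) ^ ((2 : ℝ) + α)⌉₊)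
    (Ω : ℕ → Type) (mΩ : ∀ n, MeasurableSpace (Ω n))
    (μ : ∀ n, Measure (Ω n)) (hμ : ∀ n, IsProbabilityMeasure (μ n))
    (P : ∀ n, Ω n → Fin n → ℝ)
    (X : ∀ n, Ω n → Fin n → Fin (m n) → Bool)
    (W : ∀ n, Ω n → Fin n → Fin (l n) → Bool)
    (prm : ∀ n, Ω n → Equiv.Perm (Fin n))
    (hP : ∀ n, Measurable (P n)) (hX : ∀ n, Measurable (X n))
    (hW : ∀ n, Measurable (W n))
    (hprm : ∀ n (σ : Equiv.Perm (Fin n)), MeasurableSet {ω | prm n ω = σ})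
    -- `Π` is uniform on the `n!` permutations, independent of `(P, X, W)`, and
    -- `(P, X, W)` has the two-state i.i.d. law described above:
    (hjoint : ∀ n (σ : Equiv.Perm (Fin n))
        (s : Set ((Fin n → ℝ) × (Fin n → Fin (m n) → Bool) × (Fin n → Fin (l n) → Bool))),
        MeasurableSet s →
        μ n {ω | prm n ω = σ ∧ (P n ω, X n ω, W n ω) ∈ s} =
          ((n.factorial : ℝ≥0∞))⁻¹ * twoStateLaw n (m n) (l n) μP s)
    -- an arbitrary choice of a time `k n ∈ {1, …, m n}` for each `n`:
    (k : ∀ n : ℕ, 0 < n → Fin (m n)) :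
    Tendsto (fun n =>
        if hn : 0 < n then
          sInf {e : ℝ |
            ∃ g : (Fin n → Fin (l n) → Bool) × (Fin n → Fin (m n) → Bool) → Bool,
              Measurable g ∧
              e = (μ n {ω |
                    g (W n ω, fun v => X n ω ((prm n ω).symm v)) ≠ X n ω ⟨0, hn⟩ (k n hn)}).toReal}
        else 0)
      atTop (nhds 0) := by
  have hae := muP_ae hμP hf0
  have hδ₂ : 0 ≤ δ₂ := by
    have := hf (1/2) (by norm_num)
    linarith
  have hb := fun s (hs : MeasurableSet s) => muP_bound hδ₁ hμP hf0 hf hs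
  set B : ℕ → ℝ := fun n => 2 * ((n : ℝ) * Real.exp (-(2 * c) * (n : ℝ) ^ (α / 2)))
    + 2 * ((n : ℝ) * Real.exp (-(2 * c') * (n : ℝ) ^ (α / 2)))
    + 8 * δ₂ * (n : ℝ) ^ (-(α / 4)) with hB
  have hBt : Tendsto B atTop (nhds 0) := by
    have h3 : Tendsto (fun n : ℕ => (n : ℝ) ^ (-(α / 4))) atTop (nhds 0) :=
      (tendsto_rpow_neg_atTop (by positivity)).comp tendsto_natCast_atTop_atTop
    have := (((tend_exp c α hc hα).const_mul 2).add ((tend_exp c' α hc' hα).const_mul 2)).add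
      (h3.const_mul (8 * δ₂))
    rw [mul_zero, mul_zero, add_zero, add_zero] at this
    exact this
  refine tendsto_of_tendsto_of_tendsto_of_le_of_le' tendsto_const_nhds hBt
    (Eventually.of_forall fun n => ?_) ?_
  · by_cases hn : 0 < n
    · simp only [hn, dif_pos]
      refine Real.sInf_nonneg ?_
      rintro e ⟨g, _, rfl⟩
      positivity
    · simp [hn]
  filter_upwards [eventually_gt_atTop 0] with n hn
  simp only [hn, dif_pos]
  have hn' : (0 : ℝ) < n := by exact_mod_cast hn
  have hn1 : (1 : ℝ) ≤ n := by exact_mod_cast hn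
  obtain ⟨g, hg, hgood⟩ := exists_est n (m n) (l n) ⟨0, hn⟩ (k n hn)
  set t : ℝ := (n : ℝ) ^ (-1 - α / 4) with ht
  have ht0 : 0 ≤ t := by positivity
  have hmn : 0 < m n := by rw [hm]; exact Nat.ceil_pos.2 (by positivity)
  have hln : 0 < l n := by rw [hl]; exact Nat.ceil_pos.2 (by positivity)
  have hlaw := law_bad n (m n) (l n) hmn hln μP hae hδ₂ hb ⟨0, hn⟩ ht0
  have hmt : ∀ (a : ℝ) (N : ℕ), N = ⌈a * (n : ℝ) ^ ((2 : ℝ) + α)⌉₊ →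
      Real.exp (-2 * N * t ^ 2) ≤ Real.exp (-(2 * a) * (n : ℝ) ^ (α / 2)) := by
    intro a N hN
    apply Real.exp_le_exp.2
    have h1 : a * (n : ℝ) ^ ((2 : ℝ) + α) ≤ N := by rw [hN]; exact Nat.le_ceil _
    have h2 : (n : ℝ) ^ (α / 2) = (n : ℝ) ^ ((2 : ℝ) + α) * t ^ 2 := by
      rw [ht, ← Real.rpow_natCast, ← Real.rpow_mul hn'.le, ← Real.rpow_add hn']
      congr 1
      push_cast
      ring
    rw [h2]
    have h3 := mul_le_mul_of_nonneg_right h1 (sq_nonneg t)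
    linarith
  have hnt : (n : ℝ) * t = (n : ℝ) ^ (-(α / 4)) := by
    rw [ht]
    nth_rewrite 1 [← Real.rpow_one (n : ℝ)]
    rw [← Real.rpow_add hn']
    congr 1
    ring
  have hle : (n * (2 * Real.exp (-2 * (m n : ℕ) * t ^ 2)) + 2 * Real.exp (-2 * (l n : ℕ) * t ^ 2)
        + n * (δ₂ * (8 * t))) ≤ B n := by
    rw [hB]
    simp only
    rw [← hnt]
    have h1 := mul_le_mul_of_nonneg_left (hmt c (m n) (hm n)) hn'.le
    have h2 := hmt c' (l n) (hl n)
    have h3 := le_mul_of_one_le_left (Real.exp_pos (-(2 * c') * (n : ℝ) ^ (α / 2))).le hn1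
    nlinarith
  have hBn : 0 ≤ B n := by rw [hB]; positivity
  have herr : μ n {ω | g (W n ω, fun v => X n ω ((prm n ω).symm v)) ≠ X n ω ⟨0, hn⟩ (k n hn)}
      ≤ twoStateLaw n (m n) (l n) μP (badSet n (m n) (l n) ⟨0, hn⟩ t) := by
    calc _ ≤ μ n (⋃ σ : Equiv.Perm (Fin n),
            {ω | prm n ω = σ ∧ (P n ω, X n ω, W n ω) ∈ badSet n (m n) (l n) ⟨0, hn⟩ t}) := by
          refine measure_mono fun ω hω => ?_
          exact Set.mem_iUnion.2 ⟨prm n ω, rfl, hgood t _ _ _ _ hω⟩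
      _ ≤ ∑ σ : Equiv.Perm (Fin n), μ n
            {ω | prm n ω = σ ∧ (P n ω, X n ω, W n ω) ∈ badSet n (m n) (l n) ⟨0, hn⟩ t} :=
          measure_iUnion_fintype_le _ _
      _ = _ := by
          simp_rw [hjoint n _ _ (badSet_meas n (m n) (l n) ⟨0, hn⟩ t)]
          rw [Finset.sum_const, Finset.card_univ, Fintype.card_perm, Fintype.card_fin,
            nsmul_eq_mul, ← mul_assoc, ENNReal.mul_inv_cancel, one_mul]
          · exact_mod_cast n.factorial_ne_zero
          · exact ENNReal.natCast_ne_top _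
  refine le_trans (csInf_le ?_ ?_)
    (ENNReal.toReal_le_of_le_ofReal hBn (herr.trans (hlaw.trans (ENNReal.ofReal_le_ofReal hle))))
  · refine ⟨0, ?_⟩
    rintro e ⟨g, _, rfl⟩
    positivity
  · exact ⟨g, hg, rfl⟩
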